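/- There exists a basis T of ℂ[B_q(n)] that is a disjoint union of symmetric chains, such that for every symmetric chain (v_k, …, v_{n−k}) in T starting at rank k and ending at rank n−k one has U_n(v_u) = q^k (u+1−k)_q v_{u+1} for k ≤ u < n−k, and D_n(v_{u+1}) = (n−k−u)_q v_u for k ≤ u < n−k. -/

import Mathlib

/-- The q-integer `(m)_q = 1 + q + ⋯ + q^(m-1)`, with `(0)_q = 0`. -/
def qInt (q m : ℕ) : ℕ := ∑ i ∈ Finset.range m, q ^ i

noncomputable instance (F : Type) [Field F] [Fintype F] (n : ℕ) :
    Fintype (Submodule F (Fin n → F)) := Fintype.ofFinite _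

/-- The up operator on the free complex vector space `ℂ[B_q(n)]` (realized as
functions `B_q(n) → ℂ`): it sends a subspace to the sum of the subspaces covering
it. -/
noncomputable def upOp (F : Type) [Field F] [Fintype F] (n : ℕ)
    (f : Submodule F (Fin n → F) → ℂ) : Submodule F (Fin n → F) → ℂ :=
  open Classical in
  fun Z => ∑ X : Submodule F (Fin n → F),
    if X ≤ Z ∧ Module.finrank F X + 1 = Module.finrank F Z then f X else 0

/-- The down operator on `ℂ[B_q(n)]`: it sends a subspace to the sum of the
subspaces it covers. -/
noncomputable def downOp (F : Type) [Field F] [Fintype F] (n : ℕ)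
    (f : Submodule F (Fin n → F) → ℂ) : Submodule F (Fin n → F) → ℂ :=
  open Classical in
  fun Z => ∑ Y : Submodule F (Fin n → F),
    if Z ≤ Y ∧ Module.finrank F Z + 1 = Module.finrank F Y then f Y else 0

open Module

section Counting

variable {K V : Type*} [Field K] [AddCommGroup V] [Module K V]

theorem card_submodule_finrank_eq_one [Fintype K] :
    Nat.card {H : Submodule K V // finrank K H = 1} = qInt (Fintype.card K) (finrank K V) := by
  rw [← Nat.card_congr (Projectivization.equivSubmodule K V),
    Projectivization.card_of_finrank K V rfl, qInt, Nat.card_eq_fintype_card]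

variable [FiniteDimensional K V]

theorem finrank_comap_mkQ (Z : Submodule K V) (H : Submodule K (V ⧸ Z)) :
    finrank K (H.comap Z.mkQ) = finrank K H + finrank K Z := by
  have h := Submodule.finrank_quotient_add_finrank (H.comap Z.mkQ)
  have e := (Submodule.quotientQuotientEquivQuotient Z _ (Submodule.le_comap_mkQ Z H)).finrank_eq
  rw [Submodule.map_comap_eq_self (by simp)] at e
  have h1 := Submodule.finrank_quotient_add_finrank H
  have h2 := Submodule.finrank_quotient_add_finrank Z
  lia

theorem card_submodule_covering [Fintype K] (Z : Submodule K V) :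
    Nat.card {Y : Submodule K V // Z ≤ Y ∧ finrank K Z + 1 = finrank K Y} =
      qInt (Fintype.card K) (finrank K V - finrank K Z) := by
  have h2 := Submodule.finrank_quotient_add_finrank Z
  have h3 : finrank K (V ⧸ Z) = finrank K V - finrank K Z := by lia
  rw [← h3, ← card_submodule_finrank_eq_one (K := K) (V := V ⧸ Z)]
  refine Nat.card_congr (Equiv.symm (Equiv.trans ?_ (Equiv.subtypeSubtypeEquivSubtypeInter
    (fun Y : Submodule K V => Z ≤ Y) (fun Y => finrank K Z + 1 = finrank K Y))))
  refine (Submodule.comapMkQRelIso Z).toEquiv.subtypeEquiv fun H => ?_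
  have := finrank_comap_mkQ Z H
  change _ ↔ finrank K Z + 1 = finrank K (H.comap Z.mkQ)
  lia

theorem card_submodule_finrank_add_one_eq [Fintype K] :
    Nat.card {W : Submodule K V // finrank K W + 1 = finrank K V} =
      qInt (Fintype.card K) (finrank K V) := by
  rw [← Subspace.dual_finrank_eq (K := K) (V := V),
    ← card_submodule_finrank_eq_one (K := K) (V := Dual K V)]
  refine Nat.card_congr
    ((Subspace.orderIsoFiniteDimensional (K := K) (V := V)).toEquiv.subtypeEquiv fun W => ?_)
  have := Subspace.finrank_add_finrank_dualAnnihilator_eq W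
  change _ ↔ finrank K W.dualAnnihilator = 1
  rw [Subspace.dual_finrank_eq]
  lia

theorem card_submodule_covered [Fintype K] (Z : Submodule K V) :
    Nat.card {W : Submodule K V // W ≤ Z ∧ finrank K W + 1 = finrank K Z} =
      qInt (Fintype.card K) (finrank K Z) := by
  rw [← card_submodule_finrank_add_one_eq (K := K) (V := Z)]
  refine Nat.card_congr (Equiv.symm (Equiv.trans ?_ (Equiv.subtypeSubtypeEquivSubtypeInter
    (fun Y : Submodule K V => Y ≤ Z) (fun Y => finrank K Y + 1 = finrank K Z))))
  refine (Submodule.mapIic Z).toEquiv.subtypeEquiv fun H => ?_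
  change _ ↔ finrank K (H.map Z.subtype) + 1 = _
  rw [Submodule.finrank_map_subtype_eq]

/-- Two distinct subspaces of equal dimension have a common upper cover exactly when they have a
common lower cover, and both are then unique. -/
theorem card_common_cover_eq {X Z : Submodule K V} (hXZ : X ≠ Z)
    (hr : finrank K X = finrank K Z) :
    Nat.card {Y : Submodule K V // (Z ≤ Y ∧ finrank K Z + 1 = finrank K Y) ∧
        (X ≤ Y ∧ finrank K X + 1 = finrank K Y)} =
      Nat.card {W : Submodule K V // (W ≤ Z ∧ finrank K W + 1 = finrank K Z) ∧
        (W ≤ X ∧ finrank K W + 1 = finrank K X)} := by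
  have hmod := Submodule.finrank_sup_add_finrank_inf_eq X Z
  have hsup : finrank K Z < finrank K ↥(X ⊔ Z) := by
    refine Submodule.finrank_lt_finrank_of_lt (lt_of_le_of_ne le_sup_right fun h => hXZ ?_)
    exact Submodule.eq_of_le_of_finrank_eq (h ▸ le_sup_left) hr
  have hup : ∀ Y : Submodule K V, ((Z ≤ Y ∧ finrank K Z + 1 = finrank K Y) ∧
      (X ≤ Y ∧ finrank K X + 1 = finrank K Y)) ↔
      (Y = X ⊔ Z ∧ finrank K Z + 1 = finrank K ↥(X ⊔ Z)) := by
    refine fun Y => ⟨fun h => ?_, ?_⟩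
    · have hle : X ⊔ Z ≤ Y := sup_le h.2.1 h.1.1
      have := Submodule.finrank_mono hle
      have h' := Submodule.eq_of_le_of_finrank_eq hle (by lia)
      exact ⟨h'.symm, by rw [h']; exact h.1.2⟩
    · rintro ⟨rfl, h⟩
      exact ⟨⟨le_sup_right, h⟩, le_sup_left, hr ▸ h⟩
  have hdown : ∀ W : Submodule K V, ((W ≤ Z ∧ finrank K W + 1 = finrank K Z) ∧
      (W ≤ X ∧ finrank K W + 1 = finrank K X)) ↔
      (W = X ⊓ Z ∧ finrank K Z + 1 = finrank K ↥(X ⊔ Z)) := by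
    refine fun W => ⟨fun h => ?_, ?_⟩
    · have hle : W ≤ X ⊓ Z := le_inf h.2.1 h.1.1
      have := Submodule.finrank_mono hle
      have h' := Submodule.eq_of_le_of_finrank_eq hle (by lia)
      exact ⟨h', by rw [← h'] at hmod; lia⟩
    · rintro ⟨rfl, h⟩
      exact ⟨⟨inf_le_right, by lia⟩, inf_le_left, by lia⟩
  simp only [hup, hdown]
  by_cases h : finrank K Z + 1 = finrank K ↥(X ⊔ Z) <;> simp [h]

end Counting

section Operators

variable {F : Type} [Field F] {n : ℕ}

/-- `upOp` as a linear map. -/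
noncomputable def upLin (F : Type) [Field F] [Fintype F] (n : ℕ) :
    (Submodule F (Fin n → F) → ℂ) →ₗ[ℂ] (Submodule F (Fin n → F) → ℂ) where
  toFun := upOp F n
  map_add' f g := by
    ext Z
    simp only [upOp, Pi.add_apply, ← Finset.sum_add_distrib]
    exact Finset.sum_congr rfl fun X _ => by split_ifs <;> simp
  map_smul' a f := by
    ext Z
    simp only [upOp, Pi.smul_apply, RingHom.id_apply, Finset.smul_sum]
    exact Finset.sum_congr rfl fun X _ => by split_ifs <;> simp

/-- `downOp` as a linear map. -/
noncomputable def downLin (F : Type) [Field F] [Fintype F] (n : ℕ) :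
    (Submodule F (Fin n → F) → ℂ) →ₗ[ℂ] (Submodule F (Fin n → F) → ℂ) where
  toFun := downOp F n
  map_add' f g := by
    ext Z
    simp only [downOp, Pi.add_apply, ← Finset.sum_add_distrib]
    exact Finset.sum_congr rfl fun X _ => by split_ifs <;> simp
  map_smul' a f := by
    ext Z
    simp only [downOp, Pi.smul_apply, RingHom.id_apply, Finset.smul_sum]
    exact Finset.sum_congr rfl fun X _ => by split_ifs <;> simp

/-- `f` is a linear combination of `r`-dimensional subspaces. -/
def IsHomog (r : ℕ) (f : Submodule F (Fin n → F) → ℂ) : Prop :=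
  ∀ X, f X ≠ 0 → finrank F X = r

theorem IsHomog.smul {r : ℕ} {f : Submodule F (Fin n → F) → ℂ} (hf : IsHomog r f) (a : ℂ) :
    IsHomog r (a • f) := fun X hX => hf X fun h => hX (by simp [h])

/-- The homogeneous component of rank `k`. -/
noncomputable def homogComponent (k : ℕ) (f : Submodule F (Fin n → F) → ℂ) :
    Submodule F (Fin n → F) → ℂ :=
  fun X => if finrank F X = k then f X else 0

theorem isHomog_homogComponent (k : ℕ) (f : Submodule F (Fin n → F) → ℂ) :
    IsHomog k (homogComponent k f) := fun X hX => by
  by_contra h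
  simp [homogComponent, h] at hX

theorem sum_homogComponent (f : Submodule F (Fin n → F) → ℂ) :
    ∑ k ∈ Finset.range (n + 1), homogComponent k f = f := by
  ext X
  have := Submodule.finrank_le X
  rw [finrank_fin_fun] at this
  simp only [Finset.sum_apply, homogComponent, Finset.sum_ite_eq, Finset.mem_range]
  rw [if_pos (by lia)]

variable [Fintype F]

theorem IsHomog.up {r : ℕ} {f : Submodule F (Fin n → F) → ℂ} (hf : IsHomog r f) :
    IsHomog (r + 1) (upLin F n f) := by
  classical
  intro Z hZ
  obtain ⟨X, -, hX⟩ := Finset.exists_ne_zero_of_sum_ne_zero hZ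
  rw [ite_ne_right_iff] at hX
  rw [← hX.1.2, hf X hX.2]

theorem sum_mul_downLin (f g : Submodule F (Fin n → F) → ℂ) :
    ∑ X, g X * downLin F n f X = ∑ X, upLin F n g X * f X := by
  simp only [downLin, upLin, LinearMap.coe_mk, AddHom.coe_mk, downOp, upOp, Finset.mul_sum,
    Finset.sum_mul, mul_ite, ite_mul, mul_zero, zero_mul]
  exact Finset.sum_comm

theorem star_upLin (f : Submodule F (Fin n → F) → ℂ) :
    star (upLin F n f) = upLin F n (star f) := by
  ext Z
  simp [upLin, upOp, apply_ite]

theorem sum_ite_sum_ite {α : Type*} [Fintype α] (P : α → Prop) (Q : α → α → Prop) [DecidablePred P]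
    [∀ x, DecidablePred (Q x)] (f : α → ℂ) :
    (∑ y, if P y then ∑ x, if Q x y then f x else 0 else 0) =
      ∑ x, (Nat.card {y // P y ∧ Q x y} : ℂ) * f x := by
  simp only [Nat.card_eq_fintype_card, Fintype.card_subtype, Finset.card_filter, Nat.cast_sum,
    Finset.sum_mul]
  rw [Finset.sum_comm]
  refine Finset.sum_congr rfl fun y _ => ?_
  by_cases h : P y <;> simp [h]

theorem downLin_upLin_of_isHomog {r : ℕ} {f : Submodule F (Fin n → F) → ℂ} (hf : IsHomog r f) :
    downLin F n (upLin F n f) = upLin F n (downLin F n f) +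
      ((qInt (Fintype.card F) (n - r) : ℂ) - qInt (Fintype.card F) r) • f := by
  classical
  ext Z
  have hterm : ∀ X : Submodule F (Fin n → F),
      (Nat.card {Y : Submodule F (Fin n → F) // (Z ≤ Y ∧ finrank F Z + 1 = finrank F Y) ∧
          (X ≤ Y ∧ finrank F X + 1 = finrank F Y)} : ℂ) * f X =
        (Nat.card {W : Submodule F (Fin n → F) // (W ≤ Z ∧ finrank F W + 1 = finrank F Z) ∧
          (W ≤ X ∧ finrank F W + 1 = finrank F X)} : ℂ) * f X +
        if X = Z then
          ((qInt (Fintype.card F) (n - r) : ℂ) - qInt (Fintype.card F) r) * f Z else 0 := by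
    intro X
    by_cases hX : f X = 0
    · by_cases h : X = Z
      · subst h; simp [hX]
      · simp [hX, h]
    by_cases h : X = Z
    · subst h
      have hr := hf X hX
      simp only [and_self, if_true]
      rw [card_submodule_covering, card_submodule_covered, hr, finrank_fin_fun]
      ring
    · by_cases hZ : finrank F Z = r
      · rw [card_common_cover_eq h ((hf X hX).trans hZ.symm), if_neg h, add_zero]
      · have hne : finrank F X ≠ finrank F Z := fun h' => hZ (h' ▸ hf X hX)
        have h1 : IsEmpty {Y : Submodule F (Fin n → F) //
            (Z ≤ Y ∧ finrank F Z + 1 = finrank F Y) ∧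
            (X ≤ Y ∧ finrank F X + 1 = finrank F Y)} := ⟨fun Y => hne (by have := Y.2; lia)⟩
        have h2 : IsEmpty {W : Submodule F (Fin n → F) //
            (W ≤ Z ∧ finrank F W + 1 = finrank F Z) ∧
            (W ≤ X ∧ finrank F W + 1 = finrank F X)} := ⟨fun Y => hne (by have := Y.2; lia)⟩
        simp [h]
  have hDU := sum_ite_sum_ite (fun Y => Z ≤ Y ∧ finrank F Z + 1 = finrank F Y)
    (fun X Y => X ≤ Y ∧ finrank F X + 1 = finrank F Y) f
  have hUD := sum_ite_sum_ite (fun W => W ≤ Z ∧ finrank F W + 1 = finrank F Z)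
    (fun X W => W ≤ X ∧ finrank F W + 1 = finrank F X) f
  have hsum := Finset.sum_congr (s₁ := Finset.univ) rfl fun X _ => hterm X
  rw [Finset.sum_add_distrib, ← hDU, ← hUD, Finset.sum_ite_eq' Finset.univ Z] at hsum
  simp only [Finset.mem_univ, if_true] at hsum
  simp only [Pi.add_apply, Pi.smul_apply, smul_eq_mul, downLin, upLin, LinearMap.coe_mk,
    AddHom.coe_mk, downOp, upOp]
  convert hsum

theorem qInt_add (q a b : ℕ) : qInt q (a + b) = qInt q a + q ^ a * qInt q b := by
  simp [qInt, Finset.sum_range_add, pow_add, Finset.mul_sum]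

theorem qInt_one (q : ℕ) : qInt q 1 = 1 := by simp [qInt]

theorem qInt_pos {q m : ℕ} (hm : 0 < m) : 0 < qInt q m := by
  obtain ⟨k, rfl⟩ := Nat.exists_eq_add_of_lt hm
  rw [zero_add, add_comm, qInt_add, qInt_one]
  lia

theorem qInt_lt_qInt {q a b : ℕ} (hq : 0 < q) (h : a < b) : qInt q a < qInt q b := by
  obtain ⟨k, rfl⟩ := Nat.exists_eq_add_of_lt h
  rw [add_assoc, qInt_add]
  have := Nat.mul_pos (pow_pos hq a) (qInt_pos (q := q) (Nat.succ_pos k))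
  lia

/-- The up operator's adjoint is the down operator, so `D U` is positive semidefinite; above the
middle rank the commutation relation then forces `D` to be injective. -/
theorem eq_zero_of_downLin_eq_zero {r : ℕ} {f : Submodule F (Fin n → F) → ℂ} (hf : IsHomog r f)
    (hD : downLin F n f = 0) (hr : n < 2 * r) : f = 0 := by
  by_contra hne
  have hcomm := downLin_upLin_of_isHomog hf
  rw [hD, map_zero, zero_add] at hcomm
  have hadj := sum_mul_downLin (upLin F n f) (star f)
  rw [hcomm, ← star_upLin] at hadj
  have hnorm : ∀ g : Submodule F (Fin n → F) → ℂ,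
      ∑ X, star g X * g X = ((∑ X, Complex.normSq (g X) : ℝ) : ℂ) := fun g => by
    push_cast
    exact Finset.sum_congr rfl fun X _ => by
      rw [Complex.normSq_eq_conj_mul_self]; rfl
  have hleft : ∑ X, star f X * (((qInt (Fintype.card F) (n - r) : ℂ) -
      qInt (Fintype.card F) r) • f) X =
      (((qInt (Fintype.card F) (n - r) : ℝ) - qInt (Fintype.card F) r) *
        ∑ X, Complex.normSq (f X) : ℝ) := by
    push_cast
    rw [← Complex.ofReal_sum, ← hnorm, Finset.mul_sum]
    exact Finset.sum_congr rfl fun X _ => by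
      simp only [Pi.smul_apply, smul_eq_mul]; ring
  rw [hleft, hnorm] at hadj
  have hadj := Complex.ofReal_injective hadj
  have h1 : 0 ≤ ∑ X, Complex.normSq (upLin F n f X) :=
    Finset.sum_nonneg fun X _ => Complex.normSq_nonneg _
  have h2 : 0 < ∑ X, Complex.normSq (f X) := by
    obtain ⟨X, hX⟩ := Function.ne_iff.mp hne
    exact Finset.sum_pos' (fun X _ => Complex.normSq_nonneg _)
      ⟨X, Finset.mem_univ _, Complex.normSq_pos.mpr hX⟩
  have h3 : (qInt (Fintype.card F) (n - r) : ℝ) < qInt (Fintype.card F) r := by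
    exact_mod_cast qInt_lt_qInt Fintype.card_pos (by lia)
  nlinarith

/-- The chain through a vector `v` of rank `k` obtained by repeatedly applying `U` and rescaling;
`chainVec k v j` has rank `k + j`. -/
noncomputable def chainVec (k : ℕ) (v : Submodule F (Fin n → F) → ℂ) :
    ℕ → Submodule F (Fin n → F) → ℂ
  | 0 => v
  | j + 1 => ((Fintype.card F : ℂ) ^ k * (qInt (Fintype.card F) (j + 1) : ℂ))⁻¹ •
      upLin F n (chainVec k v j)

theorem chainVec_succ (k : ℕ) (v : Submodule F (Fin n → F) → ℂ) (j : ℕ) :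
    chainVec k v (j + 1) = ((Fintype.card F : ℂ) ^ k * (qInt (Fintype.card F) (j + 1) : ℂ))⁻¹ •
      upLin F n (chainVec k v j) := rfl

theorem chainVec_coeff_ne_zero (F : Type) [Field F] [Fintype F] (k j : ℕ) :
    (Fintype.card F : ℂ) ^ k * (qInt (Fintype.card F) (j + 1) : ℂ) ≠ 0 := by
  have := (qInt_pos (q := Fintype.card F) (Nat.succ_pos j)).ne'
  have := (Fintype.card_pos (α := F)).ne'
  positivity

theorem upLin_chainVec (k : ℕ) (v : Submodule F (Fin n → F) → ℂ) (j : ℕ) :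
    upLin F n (chainVec k v j) =
      ((Fintype.card F : ℂ) ^ k * (qInt (Fintype.card F) (j + 1) : ℂ)) • chainVec k v (j + 1) := by
  rw [chainVec_succ, smul_inv_smul₀ (chainVec_coeff_ne_zero F k j)]

theorem isHomog_chainVec {k : ℕ} {v : Submodule F (Fin n → F) → ℂ} (hv : IsHomog k v) (j : ℕ) :
    IsHomog (k + j) (chainVec k v j) := by
  induction j with
  | zero => exact hv
  | succ j ih => exact ih.up.smul _

theorem downLin_chainVec {k : ℕ} {v : Submodule F (Fin n → F) → ℂ} (hv : IsHomog k v)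
    (hD : downLin F n v = 0) (j : ℕ) (hj : 2 * k + j ≤ n) :
    downLin F n (chainVec k v (j + 1)) =
      (qInt (Fintype.card F) (n - 2 * k - j) : ℂ) • chainVec k v j := by
  induction j with
  | zero =>
    rw [chainVec_succ, map_smul, inv_smul_eq_iff₀ (chainVec_coeff_ne_zero F k 0),
      downLin_upLin_of_isHomog (isHomog_chainVec hv 0), smul_smul]
    obtain ⟨m, rfl⟩ := Nat.exists_eq_add_of_le hj
    rw [show chainVec k v 0 = v from rfl, hD, map_zero, zero_add,
      show 2 * k + 0 + m - (k + 0) = k + m by lia, show 2 * k + 0 + m - 2 * k - 0 = m by lia,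
      qInt_add, zero_add, qInt_one]
    congr 1
    simp
  | succ j ih =>
    rw [chainVec_succ, map_smul, inv_smul_eq_iff₀ (chainVec_coeff_ne_zero F k _),
      downLin_upLin_of_isHomog (isHomog_chainVec hv _), ih (by lia), map_smul, upLin_chainVec,
      smul_smul, smul_smul, ← add_smul]
    obtain ⟨m, rfl⟩ := Nat.exists_eq_add_of_le hj
    rw [show 2 * k + (j + 1) + m - (k + (j + 1)) = k + m by lia,
      show 2 * k + (j + 1) + m - 2 * k - (j + 1) = m by lia,
      show 2 * k + (j + 1) + m - 2 * k - j = 1 + m by lia, show j + 1 + 1 = 1 + (j + 1) by lia,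
      qInt_add _ k, qInt_add _ k, qInt_add _ 1, qInt_add _ 1 (j + 1), qInt_one]
    congr 1
    push_cast
    ring

theorem chainVec_ne_zero {k : ℕ} {v : Submodule F (Fin n → F) → ℂ} (hv : IsHomog k v)
    (hD : downLin F n v = 0) (hv0 : v ≠ 0) (j : ℕ) (hj : 2 * k + j ≤ n) :
    chainVec k v j ≠ 0 := by
  induction j with
  | zero => exact hv0
  | succ j ih =>
    intro h
    have hd := downLin_chainVec hv hD j (by lia)
    rw [h, map_zero, eq_comm, smul_eq_zero] at hd
    refine hd.elim (fun h' => ?_) (ih (by lia))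
    exact (qInt_pos (q := Fintype.card F) (by lia : 0 < n - 2 * k - j)).ne' (by exact_mod_cast h')

theorem chainVec_eq_zero {k : ℕ} {v : Submodule F (Fin n → F) → ℂ} (hv : IsHomog k v)
    (hD : downLin F n v = 0) (hk : 2 * k ≤ n) : chainVec k v (n - 2 * k + 1) = 0 := by
  refine eq_zero_of_downLin_eq_zero (isHomog_chainVec hv _) ?_ (by lia)
  rw [downLin_chainVec hv hD _ (by lia)]
  simp [qInt]

/-- Applying `D` exactly `j` times to the `j`-th chain vector returns to the start of the chain. -/
theorem downLin_pow_chainVec {k : ℕ} {v : Submodule F (Fin n → F) → ℂ} (hv : IsHomog k v)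
    (hD : downLin F n v = 0) (j : ℕ) (hj : 2 * k + j ≤ n) :
    ∃ a : ℂ, a ≠ 0 ∧ (downLin F n ^ j) (chainVec k v j) = a • v := by
  induction j with
  | zero => exact ⟨1, one_ne_zero, by simp [chainVec]⟩
  | succ j ih =>
    obtain ⟨a, ha, h⟩ := ih (by lia)
    refine ⟨(qInt (Fintype.card F) (n - 2 * k - j) : ℂ) * a, mul_ne_zero ?_ ha, ?_⟩
    · exact_mod_cast (qInt_pos (by lia)).ne'
    · rw [pow_succ, Module.End.mul_apply, downLin_chainVec hv hD j (by lia), map_smul, h, smul_smul]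

theorem downLin_pow_chainVec_eq_zero {k : ℕ} {v : Submodule F (Fin n → F) → ℂ} (hv : IsHomog k v)
    (hD : downLin F n v = 0) {i j : ℕ} (hj : 2 * k + j ≤ n) (hij : j < i) :
    (downLin F n ^ i) (chainVec k v j) = 0 := by
  obtain ⟨a, -, h⟩ := downLin_pow_chainVec hv hD j hj
  obtain ⟨m, rfl⟩ := Nat.exists_eq_add_of_lt hij
  rw [show j + m + 1 = m + 1 + j by lia, pow_add, Module.End.mul_apply, h, map_smul, pow_succ,
    Module.End.mul_apply, hD, map_zero, smul_zero]

theorem downLin_homogComponent {f : Submodule F (Fin n → F) → ℂ} (hf : downLin F n f = 0)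
    (k : ℕ) : downLin F n (homogComponent k f) = 0 := by
  classical
  ext Z
  have hZ : downLin F n f Z = 0 := by rw [hf]; rfl
  by_cases h : finrank F Z + 1 = k
  · rw [Pi.zero_apply, ← hZ]
    refine Finset.sum_congr rfl fun Y _ => ?_
    by_cases hY : Z ≤ Y ∧ finrank F Z + 1 = finrank F Y
    · rw [homogComponent, if_pos (hY.2.symm.trans h)]
    · rw [if_neg hY, if_neg hY]
  · refine Finset.sum_eq_zero fun Y _ => ?_
    by_cases hY : Z ≤ Y ∧ finrank F Z + 1 = finrank F Y
    · rw [if_pos hY, homogComponent, if_neg fun h' => h (hY.2.trans h')]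
    · rw [if_neg hY]

theorem upLin_pow_eq_zero (f : Submodule F (Fin n → F) → ℂ) : (upLin F n ^ (n + 1)) f = 0 := by
  have key : ∀ (j : ℕ) (X : Submodule F (Fin n → F)), finrank F X < j → (upLin F n ^ j) f X = 0 := by
    classical
    intro j
    induction j with
    | zero => intro X hX; lia
    | succ j ih =>
      intro X hX
      rw [pow_succ', Module.End.mul_apply]
      refine Finset.sum_eq_zero fun Y _ => ?_
      split_ifs with h
      · exact ih Y (by lia)
      · rfl
  ext X
  have := Submodule.finrank_le X
  rw [finrank_fin_fun] at this
  exact key _ X (by lia)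

/-- A `U`-stable subspace containing the kernel of `D` is everything. -/
theorem eq_top_of_ker_downLin_le {S : Submodule ℂ (Submodule F (Fin n → F) → ℂ)}
    (hker : LinearMap.ker (downLin F n) ≤ S) (hU : ∀ f ∈ S, upLin F n f ∈ S) : S = ⊤ := by
  classical
  by_contra hS
  obtain ⟨φ, hφ, hφS⟩ := S.exists_le_ker_of_lt_top (lt_top_iff_ne_top.mpr hS)
  have hex : ∃ j, φ ∘ₗ (upLin F n ^ j) = 0 :=
    ⟨n + 1, LinearMap.ext fun f => by simp [upLin_pow_eq_zero f]⟩
  obtain ⟨j, hj⟩ : ∃ j, Nat.find hex = j + 1 := by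
    refine Nat.exists_eq_succ_of_ne_zero fun h => hφ ?_
    have := Nat.find_spec hex
    rwa [h, pow_zero, Module.End.one_eq_id, LinearMap.comp_id] at this
  have hψ : φ ∘ₗ (upLin F n ^ j) ≠ 0 := Nat.find_min hex (by lia)
  have hψU : ∀ f, (φ ∘ₗ (upLin F n ^ j)) (upLin F n f) = 0 := fun f => by
    have := LinearMap.congr_fun (hj ▸ Nat.find_spec hex) f
    rwa [pow_succ] at this
  have hψS : ∀ f ∈ S, (φ ∘ₗ (upLin F n ^ j)) f = 0 := fun f hf => by
    have hmem : ∀ i, (upLin F n ^ i) f ∈ S := fun i => by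
      induction i with
      | zero => exact hf
      | succ i ih => rw [pow_succ', Module.End.mul_apply]; exact hU _ ih
    exact hφS (hmem j)
  generalize φ ∘ₗ (upLin F n ^ j) = ψ at hψ hψU hψS
  set w : Submodule F (Fin n → F) → ℂ := fun X => star (ψ (Pi.single X 1)) with hw
  have hrep : ∀ f, ψ f = ∑ X, f X * star (w X) := fun f => by
    rw [LinearMap.pi_apply_eq_sum_univ ψ f]
    refine Finset.sum_congr rfl fun X _ => ?_
    simp only [hw, star_star, smul_eq_mul]
    congr 2
    ext Y
    simp [Pi.single_apply, eq_comm]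
  have hDw' : downLin F n (star w) = 0 := by
    ext Z
    have h := hψU (Pi.single Z 1)
    rw [hrep] at h
    have h' := sum_mul_downLin (star w) (Pi.single Z 1)
    simp only [Pi.star_apply] at h'
    rw [h] at h'
    simpa [Pi.single_apply] using h'
  have hDw : downLin F n w = 0 := by
    ext Z
    have h := congrArg star (congrFun hDw' Z)
    simpa [downLin, downOp, apply_ite] using h
  have h0 := hψS w (hker hDw)
  rw [hrep] at h0
  have h0' : ∑ X, Complex.normSq (w X) = 0 := by
    have : ((∑ X, Complex.normSq (w X) : ℝ) : ℂ) = 0 := by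
      rw [← h0]
      push_cast
      exact Finset.sum_congr rfl fun X _ => (Complex.mul_conj _).symm
    exact_mod_cast this
  rw [Finset.sum_eq_zero_iff_of_nonneg fun X _ => Complex.normSq_nonneg _] at h0'
  refine hψ (LinearMap.ext fun f => ?_)
  rw [hrep]
  exact Finset.sum_eq_zero fun X hX => by simp [Complex.normSq_eq_zero.mp (h0' X hX)]

theorem exists_homogeneous_basis_ker (F : Type) [Field F] [Fintype F] (n : ℕ) :
    ∃ b : Set (Submodule F (Fin n → F) → ℂ),
      (∀ v ∈ b, ∃ k, 2 * k ≤ n ∧ IsHomog k v ∧ downLin F n v = 0) ∧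
      LinearMap.ker (downLin F n) ≤ Submodule.span ℂ b ∧
      LinearIndependent ℂ ((↑) : b → Submodule F (Fin n → F) → ℂ) := by
  obtain ⟨b, hbt, hspan, hli⟩ := exists_linearIndependent ℂ
    {v : Submodule F (Fin n → F) → ℂ | ∃ k, IsHomog k v ∧ downLin F n v = 0}
  refine ⟨b, fun v hv => ?_, fun f hf => ?_, hli⟩
  · obtain ⟨k, hk, hD⟩ := hbt hv
    refine ⟨k, ?_, hk, hD⟩
    by_contra h
    exact hli.ne_zero ⟨v, hv⟩ (eq_zero_of_downLin_eq_zero hk hD (by lia))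
  · rw [hspan, ← sum_homogComponent f]
    exact Submodule.sum_mem _ fun k _ => Submodule.subset_span
      ⟨k, isHomog_homogComponent k f, downLin_homogComponent hf k⟩

/-- Chains through linearly independent vectors of `ker D` are jointly linearly independent. -/
theorem linearIndependent_chainVec {ι : Type*} {start : ι → ℕ}
    {v : ι → Submodule F (Fin n → F) → ℂ} (hv : ∀ i, IsHomog (start i) (v i))
    (hD : ∀ i, downLin F n (v i) = 0) (hstart : ∀ i, 2 * start i ≤ n)
    (hli : LinearIndependent ℂ v) :
    LinearIndependent ℂ (fun p : Σ i : ι, {u : ℕ // start i ≤ u ∧ u ≤ n - start i} =>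
      chainVec (start p.1) (v p.1) (p.2.1 - start p.1)) := by
  classical
  rw [linearIndependent_iff']
  intro s g hg
  by_contra! hne
  obtain ⟨p₀, hp₀, hgp₀⟩ := hne
  obtain ⟨p, hp, hmax⟩ := (s.filter fun p => g p ≠ 0).exists_max_image
    (fun p => p.2.1 - start p.1) ⟨p₀, by simp [hp₀, hgp₀]⟩
  rw [Finset.mem_filter] at hp
  have hrange : ∀ p : Σ i : ι, {u : ℕ // start i ≤ u ∧ u ≤ n - start i},
      2 * start p.1 + (p.2.1 - start p.1) ≤ n := fun p => by
    have := p.2.2; have := hstart p.1; lia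
  choose a ha hpow using fun p : Σ i : ι, {u : ℕ // start i ≤ u ∧ u ≤ n - start i} =>
    downLin_pow_chainVec (hv p.1) (hD p.1) _ (hrange p)
  have happ := congrArg (downLin F n ^ (p.2.1 - start p.1)) hg
  set t := s.filter fun x => g x ≠ 0 ∧ x.2.1 - start x.1 = p.2.1 - start p.1 with ht
  have hsum : ∑ x ∈ t, (g x * a x) • v x.1 = 0 := by
    rw [map_sum, map_zero] at happ
    rw [ht, Finset.sum_filter]
    refine (Finset.sum_congr rfl fun x hx => ?_).trans happ
    rw [map_smul]
    split_ifs with h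
    · rw [← h.2, hpow, smul_smul]
    · by_cases h0 : g x = 0
      · simp [h0]
      · have hle := hmax x (by simp [hx, h0])
        have hlt : x.2.1 - start x.1 < p.2.1 - start p.1 :=
          lt_of_le_of_ne hle fun h' => h ⟨h0, h'⟩
        rw [downLin_pow_chainVec_eq_zero (hv x.1) (hD x.1) (hrange x) hlt, smul_zero]
  have hinj : Set.InjOn (fun x : Σ i : ι, {u : ℕ // start i ≤ u ∧ u ≤ n - start i} => x.1) t := by
    rintro ⟨i, u, hu⟩ hx ⟨i', u', hu'⟩ hy (rfl : i = i')
    have h1 := (Finset.mem_filter.mp hx).2.2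
    have h2 := (Finset.mem_filter.mp hy).2.2
    obtain rfl : u = u' := by dsimp only at h1 h2; lia
    rfl
  have hli' : LinearIndependent ℂ (fun x : t => v x.1.1) :=
    hli.comp (fun x : t => x.1.1) fun x y h => Subtype.ext (hinj x.2 y.2 h)
  rw [← Finset.sum_coe_sort] at hsum
  have := Fintype.linearIndependent_iff.mp hli' (fun x => g x * a x) hsum
    ⟨p, Finset.mem_filter.mpr ⟨hp.1, hp.2, rfl⟩⟩
  exact mul_ne_zero hp.2 (ha p) this

end Operators

/-- There is a basis of `ℂ[B_q(n)]` which is a disjoint union of symmetric chains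
`(v_k, …, v_{n−k})` (consisting of nonzero homogeneous elements, `v_u` of rank `u`)
on which the up and down operators act by
`U_n(v_u) = q^k (u+1−k)_q v_{u+1}` and `D_n(v_{u+1}) = (n−k−u)_q v_u` for
`k ≤ u < n−k`, with `U_n(v_{n−k}) = 0` and `D_n(v_k) = 0`. -/
theorem symmetric_chain_basis (F : Type) [Field F] [Fintype F] (n : ℕ) :
    ∃ (ι : Type) (_ : Fintype ι) (start : ι → ℕ)
      (c : ι → ℕ → (Submodule F (Fin n → F) → ℂ)),
      (∀ i, 2 * start i ≤ n) ∧
      (∀ i u, start i ≤ u → u ≤ n - start i →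
        c i u ≠ 0 ∧ ∀ X, c i u X ≠ 0 → Module.finrank F X = u) ∧
      (∀ i u, start i ≤ u → u < n - start i →
        upOp F n (c i u) =
          ((Fintype.card F : ℂ) ^ (start i) *
            (qInt (Fintype.card F) (u + 1 - start i) : ℂ)) • c i (u + 1)) ∧
      (∀ i, upOp F n (c i (n - start i)) = 0) ∧
      (∀ i u, start i ≤ u → u < n - start i →
        downOp F n (c i (u + 1)) =
          (qInt (Fintype.card F) (n - start i - u) : ℂ) • c i u) ∧
      (∀ i, downOp F n (c i (start i)) = 0) ∧
      LinearIndependent ℂ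
        (fun p : Σ i : ι, {u : ℕ // start i ≤ u ∧ u ≤ n - start i} =>
          c p.1 p.2.1) ∧
      ⊤ ≤ Submodule.span ℂ
        (Set.range (fun p : Σ i : ι, {u : ℕ // start i ≤ u ∧ u ≤ n - start i} =>
          c p.1 p.2.1)) := by
  obtain ⟨b, hb, hker, hli⟩ := exists_homogeneous_basis_ker F n
  have := hli.finite
  choose start hstart hhom hD using fun v : b => hb v v.2
  refine ⟨b, Fintype.ofFinite b, start, fun i u => chainVec (start i) i (u - start i),
    hstart, fun i u h1 h2 => ⟨?_, ?_⟩, fun i u h1 h2 => ?_, fun i => ?_, fun i u h1 h2 => ?_,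
    fun i => ?_, linearIndependent_chainVec hhom hD hstart hli, ?_⟩
  · exact chainVec_ne_zero (hhom i) (hD i) (hli.ne_zero i) _ (by have := hstart i; lia)
  · have h := isHomog_chainVec (hhom i) (u - start i)
    rwa [Nat.add_sub_cancel' h1] at h
  · have h := upLin_chainVec (start i) (i : Submodule F (Fin n → F) → ℂ) (u - start i)
    rwa [← Nat.sub_add_comm h1] at h
  · have h := upLin_chainVec (start i) (i : Submodule F (Fin n → F) → ℂ) (n - 2 * start i)
    rw [chainVec_eq_zero (hhom i) (hD i) (hstart i), smul_zero] at h
    dsimp only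
    rwa [show n - start i - start i = n - 2 * start i by lia]
  · have h := downLin_chainVec (hhom i) (hD i) (u - start i) (by lia)
    rwa [← Nat.sub_add_comm h1,
      show n - 2 * start i - (u - start i) = n - start i - u by lia] at h
  · dsimp only
    rw [Nat.sub_self]
    exact hD i
  · refine (eq_top_of_ker_downLin_le (hker.trans (Submodule.span_le.mpr fun v hv => ?_))
      fun f hf => ?_).ge
    · refine Submodule.subset_span ⟨⟨⟨v, hv⟩, start ⟨v, hv⟩, le_rfl, ?_⟩, ?_⟩
      · have := hstart ⟨v, hv⟩; lia
      · simp [chainVec]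
    · induction hf using Submodule.span_induction with
      | zero => rw [map_zero]; exact Submodule.zero_mem _
      | add f g _ _ hf hg => rw [map_add]; exact Submodule.add_mem _ hf hg
      | smul a f _ hf => rw [map_smul]; exact Submodule.smul_mem _ _ hf
      | mem f hf =>
        obtain ⟨⟨i, u, h1, h2⟩, rfl⟩ := hf
        have hs := hstart i
        dsimp only
        rw [upLin_chainVec]
        refine Submodule.smul_mem _ _ ?_
        rcases h2.lt_or_eq with h | rfl
        · refine Submodule.subset_span ⟨⟨i, u + 1, by lia, h⟩, ?_⟩
          dsimp only
          rw [Nat.sub_add_comm h1]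
        · rw [show n - start i - start i = n - 2 * start i by lia,
            chainVec_eq_zero (hhom i) (hD i) hs]
          exact Submodule.zero_mem _
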